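/- Let E be a measurable space, b ≥ 1, and let μ and ν be probability measures on E. On a probability space let X ~ ν and let X^(1), …, X^(b) be i.i.d. with law μ, with X, X^(1), …, X^(b) mutually independent. Let T : E^{b+1} → ℝ^{b+1} be measurable and X-symmetric, i.e., T(x ∘ σ) = T(x) ∘ σ for every permutation σ of {0, 1, …, b}. Write (T_0, …, T_b) = T(X, X^(1), …, X^(b)) and define the p-value p = (1/(b+1)) · #{k ∈ {0, 1, …, b} : T_0 ≤ T_k}. Then for every α ∈ [0, 1], P(p ≤ α) ≤ α + d_TV(ν, μ). -/

import Mathlib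

open MeasureTheory ProbabilityTheory

/-!
If all coordinates have law `μ`, the scores `T` are exchangeable, so every coordinate has the same
probability of being among those with `p`-value at most `α`. At most a fraction `α` of the
coordinates can be such: they are all counted in the `p`-value of the lowest-scoring one among them.
Replacing the law `μ` of one coordinate of a product measure by `ν` changes the probability of an
event by at most `d_TV(ν, μ)`: apply Fubini, and bound `ν ≤ (ν - μ) + μ`, where the truncated
difference `ν - μ` has mass at most `d_TV(ν, μ)` by the Hahn decomposition.
-/

open scoped Finset

section TotalVariation

variable {E : Type*} [MeasurableSpace E]

/-- The total variation distance `sup_B |ν(B) - μ(B)|` between two finite measures, with values in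
`ℝ`. -/
noncomputable def tvDist (ν μ : Measure E) : ℝ :=
  ⨆ B : {B : Set E // MeasurableSet B}, |ν.real B - μ.real B|

theorem tvDist_nonneg (ν μ : Measure E) : 0 ≤ tvDist ν μ :=
  Real.iSup_nonneg fun _ => abs_nonneg _

variable (ν μ : Measure E) [IsFiniteMeasure ν] [IsFiniteMeasure μ]

theorem abs_measureReal_sub_le_tvDist {B : Set E} (hB : MeasurableSet B) :
    |ν.real B - μ.real B| ≤ tvDist ν μ := by
  refine le_ciSup (f := fun B : {B : Set E // MeasurableSet B} => |ν.real B - μ.real B|)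
    ⟨max (ν.real Set.univ) (μ.real Set.univ), ?_⟩ ⟨B, hB⟩
  rintro _ ⟨C, rfl⟩
  exact abs_sub_le_of_nonneg_of_le
    measureReal_nonneg (le_max_of_le_left (measureReal_mono (Set.subset_univ _)))
    measureReal_nonneg (le_max_of_le_right (measureReal_mono (Set.subset_univ _)))

theorem measure_sub_measure_le_tvDist {B : Set E} (hB : MeasurableSet B) :
    ν B - μ B ≤ ENNReal.ofReal (tvDist ν μ) := by
  rw [← ofReal_measureReal (μ := ν), ← ofReal_measureReal (μ := μ),
    ← ENNReal.ofReal_sub _ measureReal_nonneg]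
  exact ENNReal.ofReal_le_ofReal ((le_abs_self _).trans (abs_measureReal_sub_le_tvDist ν μ hB))

theorem measure_sub_univ_le_tvDist : (ν - μ) Set.univ ≤ ENNReal.ofReal (tvDist ν μ) := by
  obtain ⟨s, hs⟩ := exists_isHahnDecomposition ν μ
  have hsc : MeasurableSet sᶜ := hs.measurableSet.compl
  calc (ν - μ) Set.univ = (ν - μ) s + (ν - μ) sᶜ :=
        (measure_add_measure_compl hs.measurableSet).symm
    _ = (ν - μ) sᶜ := by rw [Measure.sub_apply_eq_zero_of_isHahnDecomposition hs, zero_add]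
    _ = (ν.restrict sᶜ - μ.restrict sᶜ) sᶜ := by
      rw [← Measure.restrict_sub_eq_restrict_sub_restrict hsc, Measure.restrict_apply_self]
    _ = ν sᶜ - μ sᶜ := by
      rw [Measure.sub_apply hsc hs.ge_on_compl, Measure.restrict_apply_self,
        Measure.restrict_apply_self]
    _ ≤ ENNReal.ofReal (tvDist ν μ) := measure_sub_measure_le_tvDist ν μ hsc

theorem lintegral_le_lintegral_add_tvDist {f : E → ENNReal} (hf : ∀ x, f x ≤ 1) :
    ∫⁻ x, f x ∂ν ≤ ∫⁻ x, f x ∂μ + ENNReal.ofReal (tvDist ν μ) :=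
  calc ∫⁻ x, f x ∂ν ≤ ∫⁻ x, f x ∂(ν - μ + μ) :=
        lintegral_mono' (Measure.sub_le_iff_le_add.1 le_rfl) le_rfl
    _ = ∫⁻ x, f x ∂μ + ∫⁻ x, f x ∂(ν - μ) := by rw [lintegral_add_measure, add_comm]
    _ ≤ ∫⁻ x, f x ∂μ + ∫⁻ _, 1 ∂(ν - μ) := by gcongr with x; exact hf x
    _ ≤ ∫⁻ x, f x ∂μ + ENNReal.ofReal (tvDist ν μ) := by
      rw [lintegral_one]
      gcongr
      exact measure_sub_univ_le_tvDist ν μ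

end TotalVariation

theorem pi_le_pi_add_tvDist {ι : Type*} [Fintype ι] {E : ι → Type*}
    [∀ i, MeasurableSpace (E i)] (m m' : ∀ i, Measure (E i)) [∀ i, IsProbabilityMeasure (m i)]
    [∀ i, IsProbabilityMeasure (m' i)] {i : ι} (hm : ∀ j ≠ i, m j = m' j) {A : Set (∀ i, E i)}
    (hA : MeasurableSet A) :
    Measure.pi m A ≤ Measure.pi m' A + ENNReal.ofReal (tvDist (m i) (m' i)) := by
  classical
  obtain ⟨x⟩ : Nonempty (∀ i, E i) := nonempty_of_isProbabilityMeasure (Measure.pi m)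
  set f : (∀ i, E i) → ENNReal := A.indicator 1
  have hf : Measurable f := measurable_one.indicator hA
  have integrate_coordinate_last (κ : ∀ i, Measure (E i)) [∀ i, IsProbabilityMeasure (κ i)] :
      Measure.pi κ A =
        ∫⁻ y, lmarginal κ (Finset.univ.erase i) f (Function.update x i y) ∂κ i := by
    rw [← lintegral_indicator_one hA, lintegral_eq_lmarginal_univ x,
      lmarginal_erase f hf (Finset.mem_univ i)]
  have marginal_eq :
      lmarginal m (Finset.univ.erase i) f = lmarginal m' (Finset.univ.erase i) f := by
    have : (fun j : Finset.univ.erase i => m j) = fun j : Finset.univ.erase i => m' j :=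
      funext fun j => hm j (Finset.ne_of_mem_erase j.2)
    unfold lmarginal
    rw [this]
  have marginal_le_one (y : ∀ i, E i) : lmarginal m' (Finset.univ.erase i) f y ≤ 1 :=
    (lintegral_mono fun _ => Set.indicator_le_self' (fun _ _ => zero_le_one) _).trans_eq (by simp)
  rw [integrate_coordinate_last m, integrate_coordinate_last m', marginal_eq]
  exact lintegral_le_lintegral_add_tvDist _ _ fun _ => marginal_le_one _

theorem sum_measure_le_of_card_le {ι E : Type*} [Fintype ι] [MeasurableSpace E]
    (ρ : Measure E) {p : ι → E → Prop} [∀ x, DecidablePred (p · x)]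
    (hp : ∀ i, MeasurableSet {x | p i x}) {c : ENNReal} (hc : ∀ x, #{i | p i x} ≤ c) :
    ∑ i, ρ {x | p i x} ≤ c * ρ Set.univ :=
  calc ∑ i, ρ {x | p i x} = ∫⁻ x, ∑ i, {x | p i x}.indicator 1 x ∂ρ := by
        rw [lintegral_finsetSum _ fun i _ => measurable_one.indicator (hp i)]
        simp only [lintegral_indicator_one (hp _)]
    _ = ∫⁻ x, #{i | p i x} ∂ρ := by
      classical
      simp only [Set.indicator_apply, Set.mem_ofPred_eq, Pi.one_apply, Finset.sum_boole]
    _ ≤ ∫⁻ _, c ∂ρ := lintegral_mono hc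
    _ = c * ρ Set.univ := lintegral_const c

section RankPValue

variable {ι S : Type*} [Fintype ι] [LinearOrder S]

/-- The `p`-value of the coordinate `i` of a vector of scores `t`: the proportion of coordinates
(`i` itself included) that score at least as high as `i`. -/
noncomputable def rankPValue (t : ι → S) (i : ι) : ℝ :=
  #{k | t i ≤ t k} / Fintype.card ι

theorem rankPValue_comp_perm (t : ι → S) (σ : Equiv.Perm ι) (i : ι) :
    rankPValue (t ∘ σ) i = rankPValue t (σ i) := by
  have hcard : #{k | t (σ i) ≤ t (σ k)} = #{k | t (σ i) ≤ t k} :=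
    Finset.card_equiv σ (by simp)
  simp only [rankPValue, Function.comp_apply, hcard]

theorem card_rankPValue_le (t : ι → S) {α : ℝ} (hα : 0 ≤ α) :
    #{i | rankPValue t i ≤ α} ≤ α * Fintype.card ι := by
  rcases Finset.eq_empty_or_nonempty ({i | rankPValue t i ≤ α} : Finset ι) with hJ | hJ
  · rw [hJ, Finset.card_empty, Nat.cast_zero]
    positivity
  · obtain ⟨i, hi, hmin⟩ := Finset.exists_min_image _ t hJ
    have : Nonempty ι := ⟨i⟩
    have hsub : ({i | rankPValue t i ≤ α} : Finset ι) ⊆ ({k | t i ≤ t k} : Finset ι) :=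
      fun k hk => (Finset.mem_filter_univ k).2 (hmin k hk)
    calc (#{i | rankPValue t i ≤ α} : ℝ) ≤ #{k | t i ≤ t k} := mod_cast Finset.card_le_card hsub
      _ ≤ α * Fintype.card ι :=
        (div_le_iff₀ (by positivity)).1 ((Finset.mem_filter_univ i).1 hi)

theorem measurable_rankPValue [TopologicalSpace S] [OrderClosedTopology S]
    [SecondCountableTopology S] [MeasurableSpace S] [OpensMeasurableSpace S] (i : ι) :
    Measurable fun t : ι → S => rankPValue t i := by
  simp only [rankPValue, Finset.card_filter, Nat.cast_sum, Nat.cast_ite]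
  refine (Finset.measurable_sum _ fun k _ => ?_).div_const _
  exact Measurable.ite (measurableSet_le (measurable_pi_apply i) (measurable_pi_apply k))
    measurable_const measurable_const

end RankPValue

section Exchangeable

variable {ι E S : Type*} [MeasurableSpace E] [MeasurableSpace S]

/-- A law on `ι → E` is exchangeable if it is invariant under all permutations of the
coordinates. -/
def IsExchangeable (ρ : Measure (ι → E)) : Prop :=
  ∀ σ : Equiv.Perm ι, ρ.map (fun x => x ∘ σ) = ρ

theorem IsExchangeable.map {ρ : Measure (ι → E)} (hρ : IsExchangeable ρ) {T : (ι → E) → ι → S}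
    (hT : Measurable T) (hsym : ∀ (x : ι → E) (σ : Equiv.Perm ι), T (x ∘ σ) = T x ∘ σ) :
    IsExchangeable (ρ.map T) := fun σ =>
  calc (ρ.map T).map (fun t => t ∘ σ) = ρ.map fun x => T x ∘ σ :=
        Measure.map_map (by fun_prop) hT
    _ = (ρ.map fun x => x ∘ σ).map T := by
      rw [Measure.map_map hT (by fun_prop)]
      exact congrArg ρ.map (funext fun x => (hsym x σ).symm)
    _ = ρ.map T := by rw [hρ σ]

variable [Fintype ι]

theorem isExchangeable_pi (μ : Measure E) [SigmaFinite μ] :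
    IsExchangeable (Measure.pi fun _ : ι => μ) := fun σ => by
  have hσ : (fun x : ι → E => x ∘ σ) = MeasurableEquiv.piCongrLeft (fun _ => E) σ.symm := by
    ext x i
    obtain ⟨j, rfl⟩ := σ.symm.surjective i
    rw [MeasurableEquiv.piCongrLeft_apply_apply, Function.comp_apply, Equiv.apply_symm_apply]
  rw [hσ, Measure.pi_map_piCongrLeft σ.symm fun _ => μ]

variable [LinearOrder S] [TopologicalSpace S] [OrderClosedTopology S] [SecondCountableTopology S]
  [OpensMeasurableSpace S]

theorem IsExchangeable.measure_rankPValue_le_eq {ρ : Measure (ι → S)} (hρ : IsExchangeable ρ)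
    (α : ℝ) (i j : ι) : ρ {t | rankPValue t i ≤ α} = ρ {t | rankPValue t j ≤ α} := by
  classical
  have hmeas : MeasurableSet {t : ι → S | rankPValue t i ≤ α} :=
    measurable_rankPValue i measurableSet_Iic
  calc ρ {t | rankPValue t i ≤ α} = ρ {t | rankPValue (t ∘ Equiv.swap i j) i ≤ α} := by
        conv_lhs => rw [← hρ (Equiv.swap i j), Measure.map_apply (by fun_prop) hmeas]
        rfl
    _ = ρ {t | rankPValue t j ≤ α} := by simp only [rankPValue_comp_perm, Equiv.swap_apply_left]

theorem IsExchangeable.measure_rankPValue_le {ρ : Measure (ι → S)} [IsProbabilityMeasure ρ]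
    (hρ : IsExchangeable ρ) (i : ι) {α : ℝ} (hα : 0 ≤ α) :
    ρ {t | rankPValue t i ≤ α} ≤ ENNReal.ofReal α := by
  have : Nonempty ι := ⟨i⟩
  have hcount (t : ι → S) :
      (#{j | rankPValue t j ≤ α} : ENNReal) ≤ Fintype.card ι * ENNReal.ofReal α := by
    rw [← ENNReal.ofReal_natCast, ← ENNReal.ofReal_natCast, ← ENNReal.ofReal_mul (by positivity),
      mul_comm]
    exact ENNReal.ofReal_le_ofReal (card_rankPValue_le t hα)
  refine (ENNReal.mul_le_mul_iff_right (a := (Fintype.card ι : ENNReal)) (by simp) (by simp)).1 ?_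
  calc Fintype.card ι * ρ {t | rankPValue t i ≤ α} = ∑ j, ρ {t | rankPValue t j ≤ α} := by
        simp only [hρ.measure_rankPValue_le_eq α _ i, Finset.sum_const, Finset.card_univ,
          nsmul_eq_mul]
    _ ≤ Fintype.card ι * ENNReal.ofReal α * ρ Set.univ :=
      sum_measure_le_of_card_le ρ (fun j => measurable_rankPValue j measurableSet_Iic) hcount
    _ = Fintype.card ι * ENNReal.ofReal α := by rw [measure_univ, mul_one]

end Exchangeable

theorem crrt_stmt_7_general {Ω E S ι : Type*} [MeasurableSpace Ω] [MeasurableSpace E] [Fintype ι]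
    [LinearOrder S] [TopologicalSpace S] [OrderClosedTopology S] [SecondCountableTopology S]
    [MeasurableSpace S] [OpensMeasurableSpace S] {P : Measure Ω} {μ ν : Measure E}
    [IsProbabilityMeasure μ] {Z : ι → Ω → E} {i : ι} (hν : HasLaw (Z i) ν P)
    (hμ : ∀ j ≠ i, HasLaw (Z j) μ P) (hindep : iIndepFun Z P) {T : (ι → E) → ι → S}
    (hT : Measurable T) (hsym : ∀ (x : ι → E) (σ : Equiv.Perm ι), T (x ∘ σ) = T x ∘ σ)
    {α : ℝ} (hα : 0 ≤ α) :
    P {ω | rankPValue (T fun j => Z j ω) i ≤ α} ≤ ENNReal.ofReal (α + tvDist ν μ) := by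
  have hZ (j : ι) : AEMeasurable (Z j) P := by
    rcases eq_or_ne j i with rfl | hj
    exacts [hν.aemeasurable, (hμ j hj).aemeasurable]
  have := hindep.isProbabilityMeasure
  have (j : ι) : IsProbabilityMeasure (P.map (Z j)) := Measure.isProbabilityMeasure_map (hZ j)
  have hp : Measurable fun x => rankPValue (T x) i := (measurable_rankPValue i).comp hT
  have null_bound : Measure.pi (fun _ => μ) {x | rankPValue (T x) i ≤ α} ≤ ENNReal.ofReal α := by
    have := Measure.isProbabilityMeasure_map (μ := Measure.pi fun _ : ι => μ) hT.aemeasurable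
    have h := ((isExchangeable_pi μ).map hT hsym).measure_rankPValue_le i hα
    rwa [Measure.map_apply hT (measurableSet_le (measurable_rankPValue i) measurable_const)] at h
  calc P {ω | rankPValue (T fun j => Z j ω) i ≤ α}
      = Measure.pi (fun j => P.map (Z j)) {x | rankPValue (T x) i ≤ α} :=
        (hindep.hasLaw_pi fun j => ⟨hZ j, rfl⟩).measure_eq (hp measurableSet_Iic)
    _ ≤ Measure.pi (fun _ => μ) {x | rankPValue (T x) i ≤ α} +
          ENNReal.ofReal (tvDist (P.map (Z i)) μ) :=
        pi_le_pi_add_tvDist _ _ (fun j hj => (hμ j hj).map_eq) (hp measurableSet_Iic)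
    _ ≤ ENNReal.ofReal α + ENNReal.ofReal (tvDist ν μ) := by rw [hν.map_eq]; gcongr
    _ = ENNReal.ofReal (α + tvDist ν μ) := (ENNReal.ofReal_add hα (tvDist_nonneg ν μ)).symm

/-- **Theorem 2 (robustness of the CRRT under misspecification).**
Let `X ~ ν` and let `X^(1), …, X^(b)` be i.i.d. with law `μ`, all mutually
independent.  For any measurable `X`-symmetric statistic `T`, the CRRT p-value
`p = #{k : T_0 ≤ T_k}/(b+1)` computed from `(X, X^(1), …, X^(b))` satisfies
`P(p ≤ α) ≤ α + d_TV(ν, μ)` for every `α ∈ [0,1]`, where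
`d_TV(ν, μ) = sup { |ν(B) − μ(B)| : B measurable }`. -/
theorem crrt_stmt_7 {Ω E : Type*} [MeasurableSpace Ω] [MeasurableSpace E]
    (P : Measure Ω) [IsProbabilityMeasure P] (b : ℕ) (hb : 1 ≤ b)
    (μ ν : Measure E) [IsProbabilityMeasure μ] [IsProbabilityMeasure ν]
    (X : Ω → E) (Xp : Fin b → Ω → E)
    (hX : Measurable X) (hXp : ∀ k, Measurable (Xp k))
    (hlawX : P.map X = ν) (hlawXp : ∀ k, P.map (Xp k) = μ)
    (hindep : iIndepFun (Fin.cons (α := fun _ => Ω → E) X Xp) P)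
    (T : (Fin (b + 1) → E) → Fin (b + 1) → ℝ) (hT : Measurable T)
    (hsym : ∀ (x : Fin (b + 1) → E) (σ : Equiv.Perm (Fin (b + 1))),
      T (fun i => x (σ i)) = fun i => T x (σ i))
    (α : ℝ) (hα : α ∈ Set.Icc (0 : ℝ) 1) :
    P {ω | ((Finset.univ.filter fun k : Fin (b + 1) =>
          T (Fin.cons (α := fun _ => E) (X ω) fun j => Xp j ω) 0 ≤
            T (Fin.cons (α := fun _ => E) (X ω) fun j => Xp j ω) k).card : ℝ) / (b + 1) ≤ α}
      ≤ ENNReal.ofReal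
          (α + ⨆ B : {B : Set E // MeasurableSet B}, |(ν B).toReal - (μ B).toReal|) := by
  have hZ : (fun ω j => (Fin.cons X Xp : Fin (b + 1) → Ω → E) j ω) =
      fun ω => Fin.cons (X ω) fun j => Xp j ω := by
    ext ω j
    cases j using Fin.cases <;> rfl
  have h := crrt_stmt_7_general (i := 0) ⟨hX.aemeasurable, hlawX⟩
    (Fin.cases (absurd rfl) fun k _ => ⟨(hXp k).aemeasurable, hlawXp k⟩) hindep hT hsym hα.1
  simpa only [congrFun hZ, rankPValue, tvDist, Measure.real, Fintype.card_fin, Nat.cast_add_one]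
    using h
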